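/- Corollary 1 (rectangle): if a12 = a34 = a, then the length of the minimum construction tree equals 4·a·cos(θ/2) = 4·a·d/√(d² + a²), and the length of the full Steiner tree equals a·(√3 + cos(θ/2)/sin(θ/2)); here θ = 2·arctan(a/d). In symbols: 2·dist(A₁',F₁₂) + 2·dist(A₃,F₃₄) + 2·sin(θ/2)·dist(F₁₂,F₃₄) = 4·a·d/√(d² + a²) and 2·dist(A₁',O₁₂) + 2·dist(A₃,O₃₄) + dist(O₁₂,O₃₄) = a·(√3 + cos(θ/2)/sin(θ/2)). -/

import Mathlib

open Real EuclideanGeometry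

noncomputable def pt (x y : ℝ) : EuclideanSpace ℝ (Fin 2) :=
  (WithLp.equiv 2 (Fin 2 → ℝ)).symm ![x, y]

theorem dist_pt (x y z w r : ℝ) (hr : 0 ≤ r) (h : (x - z) ^ 2 + (y - w) ^ 2 = r ^ 2) :
    dist (pt x y) (pt z w) = r := by
  rw [EuclideanSpace.dist_eq]
  simp only [pt, Fin.sum_univ_two, Real.dist_eq, sq_abs]
  simp only [WithLp.equiv_symm_apply, Matrix.cons_val_zero, Matrix.cons_val_one]
  rw [h, Real.sqrt_sq hr]

theorem stmt_16 (a d θ : ℝ) (ha : 0 < a) (had : a < d)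
    (hθ : θ = 2 * Real.arctan (a / d))
    (A₁' A₂' A₃ A₄ F₁₂ F₃₄ O₁₂ O₃₄ : EuclideanSpace ℝ (Fin 2))
    (hA₁ : A₁' = pt (-(a / 2)) d) (hA₂ : A₂' = pt (a / 2) d)
    (hA₃ : A₃ = pt (a / 2) 0) (hA₄ : A₄ = pt (-(a / 2)) 0)
    (hF₁₂ : F₁₂ = pt 0 (d - a / 2 * Real.tan (θ / 2)))
    (hF₃₄ : F₃₄ = pt 0 (a / 2 * Real.tan (θ / 2)))
    (hO₁₂ : O₁₂ = pt 0 (d - a / (2 * Real.sqrt 3)))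
    (hO₃₄ : O₃₄ = pt 0 (a / (2 * Real.sqrt 3))) :
    2 * dist A₁' F₁₂ + 2 * dist A₃ F₃₄ + 2 * Real.sin (θ / 2) * dist F₁₂ F₃₄ =
      4 * a * Real.cos (θ / 2) ∧
    4 * a * Real.cos (θ / 2) = 4 * a * d / Real.sqrt (d ^ 2 + a ^ 2) ∧
    2 * dist A₁' O₁₂ + 2 * dist A₃ O₃₄ + dist O₁₂ O₃₄ =
      a * (Real.sqrt 3 + Real.cos (θ / 2) / Real.sin (θ / 2)) := by
  have hd : 0 < d := ha.trans had
  have hh : θ / 2 = Real.arctan (a / d) := by rw [hθ]; ring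
  have hs0 : 0 < Real.sqrt (d ^ 2 + a ^ 2) := Real.sqrt_pos.mpr (by positivity)
  have hs2 : Real.sqrt (d ^ 2 + a ^ 2) ^ 2 = d ^ 2 + a ^ 2 := Real.sq_sqrt (by positivity)
  have hq : Real.sqrt (1 + (a / d) ^ 2) = Real.sqrt (d ^ 2 + a ^ 2) / d := by
    rw [Real.sqrt_eq_iff_mul_self_eq (by positivity) (by positivity)]
    field_simp
    linarith
  have hcos : Real.cos (θ / 2) = d / Real.sqrt (d ^ 2 + a ^ 2) := by
    rw [hh, Real.cos_arctan, hq, one_div_div]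
  have hsin : Real.sin (θ / 2) = a / Real.sqrt (d ^ 2 + a ^ 2) := by
    rw [hh, Real.sin_arctan, hq]
    field_simp
  have htan : Real.tan (θ / 2) = a / d := by rw [hh, Real.tan_arctan]
  rw [htan] at hF₁₂ hF₃₄
  rw [hcos, hsin]
  generalize Real.sqrt (d ^ 2 + a ^ 2) = s at *
  have h30 : 0 < Real.sqrt 3 := by positivity
  have h32 : Real.sqrt 3 ^ 2 = 3 := Real.sq_sqrt (by norm_num)
  have h31 : 1 < Real.sqrt 3 := by nlinarith
  generalize Real.sqrt 3 = q at *
  subst hA₁ hA₃ hF₁₂ hF₃₄ hO₁₂ hO₃₄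
  have e1 : dist (pt (-(a / 2)) d) (pt 0 (d - a / 2 * (a / d))) = a * s / (2 * d) := by
    apply dist_pt _ _ _ _ _ (by positivity)
    field_simp
    rw [hs2]; ring
  have e2 : dist (pt (a / 2) 0) (pt 0 (a / 2 * (a / d))) = a * s / (2 * d) := by
    apply dist_pt _ _ _ _ _ (by positivity)
    field_simp
    rw [hs2]; ring
  have e3 : dist (pt 0 (d - a / 2 * (a / d))) (pt 0 (a / 2 * (a / d))) = d - a * (a / d) := by
    apply dist_pt
    · have : a / d < 1 := (div_lt_one hd).mpr had
      nlinarith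
    · ring
  have e4 : dist (pt (-(a / 2)) d) (pt 0 (d - a / (2 * q))) = a / q := by
    apply dist_pt _ _ _ _ _ (by positivity)
    field_simp
    rw [h32]; ring
  have e5 : dist (pt (a / 2) 0) (pt 0 (a / (2 * q))) = a / q := by
    apply dist_pt _ _ _ _ _ (by positivity)
    field_simp
    rw [h32]; ring
  have e6 : dist (pt 0 (d - a / (2 * q))) (pt 0 (a / (2 * q))) = d - a / q := by
    apply dist_pt
    · have : a / q < a := div_lt_self ha h31
      linarith
    · field_simp
      ring
  rw [e1, e2, e3, e4, e5, e6]
  refine ⟨?_, by ring, ?_⟩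
  · field_simp
    rw [hs2]; ring
  · field_simp
    linear_combination (-a) * h32
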